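/- Let k ≥ 2 and 0 ≤ n ≤ 2k−2 be integers and let P be a positive definite integral binary quadratic form of discriminant d < 0 whose CM point τ_P satisfies Re(Mτ_P) ≠ 0 for all M ∈ SL₂(ℤ). Then r_n(f_{k,P}) = ((−1)^{k−1} |d|^{(k−1)/2} / (2^{k−2} (k−1)! · w_P)) · (R_{2−2k}^{k−1} H_{1−k,n})(τ_P). -/

import Mathlib

open Complex MeasureTheory
open scoped Real

noncomputable section

namespace LHMF

abbrev SL2Z := Matrix.SpecialLinearGroup (Fin 2) ℤ

/-- Möbius action of `SL₂(ℤ)` on `ℂ`. -/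
def moeb (M : SL2Z) (τ : ℂ) : ℂ :=
  ((M.1 0 0 : ℂ) * τ + (M.1 0 1 : ℂ)) / ((M.1 1 0 : ℂ) * τ + (M.1 1 1 : ℂ))

/-- Automorphy factor `j(M,τ) = cτ + d`. -/
def jfac (M : SL2Z) (τ : ℂ) : ℂ := (M.1 1 0 : ℂ) * τ + (M.1 1 1 : ℂ)

/-- `E₁`: union of all `SL₂(ℤ)`-translates of the positive imaginary axis. -/
def E1 : Set ℂ := ⋃ M : SL2Z, (fun y : ℝ => moeb M ((y : ℂ) * Complex.I)) '' Set.Ioi 0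

/-- Wirtinger derivative `∂f/∂τ`. -/
def dtau (f : ℂ → ℂ) (τ : ℂ) : ℂ :=
  (fderiv ℝ f τ 1 - Complex.I * fderiv ℝ f τ Complex.I) / 2

/-- Wirtinger derivative `∂f/∂τ̄`. -/
def dtaubar (f : ℂ → ℂ) (τ : ℂ) : ℂ :=
  (fderiv ℝ f τ 1 + Complex.I * fderiv ℝ f τ Complex.I) / 2

/-- The operator `ξ_κ f = 2i v^κ conj(∂f/∂τ̄)`. -/
def xiOp (κ : ℤ) (f : ℂ → ℂ) (τ : ℂ) : ℂ :=
  2 * Complex.I * ((τ.im : ℂ) ^ κ) * starRingEnd ℂ (dtaubar f τ)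

/-- The operator `𝒟 = (1/(2πi)) ∂/∂τ`. -/
def Dop (f : ℂ → ℂ) : ℂ → ℂ := fun τ => (2 * (π : ℂ) * Complex.I)⁻¹ * dtau f τ

/-- Maass raising operator of weight `κ`. -/
def raiseOp (κ : ℤ) (f : ℂ → ℂ) (τ : ℂ) : ℂ :=
  2 * Complex.I * dtau f τ + (κ : ℂ) * (τ.im : ℂ)⁻¹ * f τ

/-- Iterated raising operator `R_κ^m = R_{κ+2m-2} ∘ ⋯ ∘ R_{κ+2} ∘ R_κ`. -/
def raiseIter (κ : ℤ) : ℕ → (ℂ → ℂ) → (ℂ → ℂ)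
  | 0 => fun f => f
  | m + 1 => fun f => raiseOp (κ + 2 * m) (raiseIter κ m f)

/-- Petersson's Poincaré series `H_{k,k-1}(z,τ)`. -/
def Hpet (k : ℕ) (z τ : ℂ) : ℂ :=
  ∑' M : SL2Z, jfac M τ ^ (2 * k - 2) * ((moeb M τ).im : ℂ) ^ (2 * k - 1) *
    (z - moeb M τ)⁻¹ * (z - starRingEnd ℂ (moeb M τ)) ^ (1 - 2 * (k : ℤ))

/-- The locally harmonic Maass form `H_{1-k,n}`. -/
def Hlhmf (k n : ℕ) (τ : ℂ) : ℂ :=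
  (2 * Complex.I) ^ (2 * k - 2) / (2 * (π : ℂ)) *
    ∫ y in Set.Ioi (0 : ℝ), Hpet k ((y : ℂ) * Complex.I) τ * (y : ℂ) ^ n

/-- The cusp form `R_n` of weight `2k`. -/
def Rnform (k n : ℕ) (τ : ℂ) : ℂ :=
  (2 : ℂ) ^ (2 * k - 3) / (Complex.I ^ (2 * k - 1 - n) * (Nat.choose (2 * k - 2) n : ℂ) * (π : ℂ)) *
    ∑' M : SL2Z, jfac M τ ^ (-2 * (k : ℤ)) * moeb M τ ^ (-(n : ℤ) - 1)

/-- Holomorphic Eichler integral of `f` (weight `2k`), along a vertical path. -/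
def eichlerHol (k : ℕ) (f : ℂ → ℂ) (τ : ℂ) : ℂ :=
  (-2 * (π : ℂ) * Complex.I) ^ (2 * k - 1) / (Nat.factorial (2 * k - 2) : ℂ) *
    ∫ t in Set.Ioi (0 : ℝ), f (τ + (t : ℂ) * Complex.I) * ((t : ℂ) * Complex.I) ^ (2 * k - 2) *
      Complex.I

/-- Non-holomorphic Eichler integral `f^*` of `f` (weight `2k`), along a vertical path. -/
def eichlerStar (k : ℕ) (f : ℂ → ℂ) (τ : ℂ) : ℂ :=
  (-2 * Complex.I) ^ (1 - 2 * (k : ℤ)) *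
    ∫ t in Set.Ioi (0 : ℝ),
      starRingEnd ℂ (f (-(starRingEnd ℂ (-(starRingEnd ℂ τ) + (t : ℂ) * Complex.I)))) *
        (-(starRingEnd ℂ τ) + (t : ℂ) * Complex.I + τ) ^ (2 * k - 2) * Complex.I

/-- Bernoulli polynomial evaluated at a complex number. -/
def bernC (m : ℕ) (τ : ℂ) : ℂ := Polynomial.aeval τ (Polynomial.bernoulli m)

/-- Periodized Bernoulli polynomial `𝔹_m(τ) = B_m(τ - ⌊Re τ⌋)`. -/
def bernPer (m : ℕ) (τ : ℂ) : ℂ := bernC m (τ - (⌊τ.re⌋ : ℂ))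

/-- The period `r_n(E_{2k})` of the Eisenstein series, for `0 < n < 2k-2`. -/
def rnE (k n : ℕ) : ℚ :=
  if n % 2 = 0 then 0
  else (-1) ^ ((n - 1) / 2) * (2 * (k : ℚ)) * bernoulli (n + 1) * bernoulli (2 * k - 1 - n) /
    (bernoulli (2 * k) * ((n : ℚ) + 1) * ((2 * k - 1 - n : ℕ) : ℚ))

/-- The local polynomial `P_{1-k,n}`. -/
def Ppoly (k n : ℕ) (τ : ℂ) : ℂ :=
  (rnE k n : ℂ)
  + (-Complex.I) ^ (n + 1) / ((n : ℂ) + 1) * bernPer (n + 1) τ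
  + Complex.I ^ (n + 1) / ((2 * k - 1 - n : ℕ) : ℂ) * bernPer (2 * k - 1 - n) τ
  + Complex.I ^ (1 - (n : ℤ)) / 2 *
      ∑' M : {M : SL2Z // 0 < M.1 0 0 * M.1 1 0 ∧ (moeb M τ).re < 0},
        jfac M.1 τ ^ (2 * k - 2) *
          (moeb M.1 τ ^ n - (-1 : ℂ) ^ n * moeb M.1 τ ^ (2 * k - 2 - n))

/-- The binary quadratic form `[a,b,c]` evaluated at complex arguments. -/
def qfC (a b c : ℤ) (x y : ℂ) : ℂ := (a : ℂ) * x ^ 2 + (b : ℂ) * x * y + (c : ℂ) * y ^ 2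

/-- CM point of the positive definite form `[a,b,c]`. -/
def cmPoint (a b c : ℤ) : ℂ :=
  (-(b : ℂ) + Complex.I * ((Real.sqrt (((b ^ 2 - 4 * a * c).natAbs : ℝ))) : ℂ)) / (2 * (a : ℂ))

/-- The form `[a,b,c] ∘ M`. -/
def qfComp (a b c : ℤ) (M : SL2Z) : ℤ × ℤ × ℤ :=
  (a * (M.1 0 0) ^ 2 + b * (M.1 0 0) * (M.1 1 0) + c * (M.1 1 0) ^ 2,
   2 * a * (M.1 0 0) * (M.1 0 1) + b * ((M.1 0 0) * (M.1 1 1) + (M.1 0 1) * (M.1 1 0)) +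
     2 * c * (M.1 1 0) * (M.1 1 1),
   a * (M.1 0 1) ^ 2 + b * (M.1 0 1) * (M.1 1 1) + c * (M.1 1 1) ^ 2)

/-- `w_P`: order of the stabilizer of `P = [a,b,c]` in `PSL₂(ℤ)` (half the order of the
stabilizer in `SL₂(ℤ)`, which contains `±1`). -/
def wP (a b c : ℤ) : ℕ := Nat.card {M : SL2Z // qfComp a b c M = (a, b, c)} / 2

/-- The meromorphic modular form `f_{k,P}` for `P = [a,b,c]`. -/
def fkP (k : ℕ) (a b c : ℤ) (z : ℂ) : ℂ :=
  (((((b ^ 2 - 4 * a * c).natAbs : ℝ)) ^ ((k : ℝ) - 1 / 2) : ℝ) : ℂ) /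
      (2 * (π : ℂ) * (wP a b c : ℂ)) *
    ∑' M : SL2Z, (qfC a b c ((M.1 0 0 : ℂ) * z + (M.1 0 1 : ℂ))
      ((M.1 1 0 : ℂ) * z + (M.1 1 1 : ℂ))) ^ (-(k : ℤ))

/-- The `n`-th period `r_n(f) = ∫₀^∞ f(iy) y^n dy`. -/
def periodN (n : ℕ) (f : ℂ → ℂ) : ℂ :=
  ∫ y in Set.Ioi (0 : ℝ), f ((y : ℂ) * Complex.I) * (y : ℂ) ^ n

/-- Epstein zeta function of `[a,b,c]` at an integer `k`. -/
def epstein (a b c : ℤ) (k : ℕ) : ℝ :=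
  ∑' p : {p : ℤ × ℤ // p ≠ (0, 0)},
    ((a * p.1.1 ^ 2 + b * p.1.1 * p.1.2 + c * p.1.2 ^ 2 : ℤ) : ℝ) ^ (-(k : ℤ))

/-- `sgn(M)` for `M = (a,b;c,d)`: `sgn(ac)` if `ac ≠ 0`, else `sgn(bd)`. -/
def sgnM (M : SL2Z) : ℤ :=
  if M.1 0 0 * M.1 1 0 ≠ 0 then Int.sign (M.1 0 0 * M.1 1 0) else Int.sign (M.1 0 1 * M.1 1 1)

/-- Upper incomplete Gamma function `Γ(s,x)` for a natural number `s`. -/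
def GammaUpper (s : ℕ) (x : ℝ) : ℝ := ∫ t in Set.Ioi x, Real.exp (-t) * t ^ (s - 1)

/-- A cusp form of weight `2k` for `SL₂(ℤ)`, as a function on `ℂ` (holomorphic on `ℍ`,
modular of weight `2k`, vanishing at the cusp `i∞`). -/
def IsCuspForm2k (k : ℕ) (f : ℂ → ℂ) : Prop :=
  (∀ τ : ℂ, 0 < τ.im → DifferentiableAt ℂ f τ) ∧
  (∀ (M : SL2Z) (τ : ℂ), 0 < τ.im → f (moeb M τ) = jfac M τ ^ (2 * k) * f τ) ∧
  Filter.Tendsto f (Filter.comap Complex.im Filter.atTop) (nhds 0)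


/-- The linear form `L_M(z,τ) = (cτ+d)z-(aτ+b)`. -/
def Lf (M : SL2Z) (z τ : ℂ) : ℂ :=
  ((M.1 1 0 : ℂ) * τ + (M.1 1 1 : ℂ)) * z - ((M.1 0 0 : ℂ) * τ + (M.1 0 1 : ℂ))

/-- Term of the series. -/
def tf (k p : ℕ) (M : SL2Z) (z τ : ℂ) : ℂ :=
  (Lf M z τ)⁻¹ ^ p * (Lf M z (starRingEnd ℂ τ))⁻¹ ^ (2 * k - p)

/-- The series. -/
def Af (k p : ℕ) (z τ : ℂ) : ℂ := ∑' M : SL2Z, tf k p M z τ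

/-- Squared norm of the matrix. -/
def Nm (M : SL2Z) : ℝ :=
  (M.1 0 0 : ℝ) ^ 2 + (M.1 0 1 : ℝ) ^ 2 + (M.1 1 0 : ℝ) ^ 2 + (M.1 1 1 : ℝ) ^ 2

lemma detZ (M : SL2Z) : M.1 0 0 * M.1 1 1 - M.1 0 1 * M.1 1 0 = 1 := by
  have := M.2
  rwa [Matrix.det_fin_two] at this

lemma detR (M : SL2Z) :
    (M.1 0 0 : ℝ) * (M.1 1 1 : ℝ) - (M.1 0 1 : ℝ) * (M.1 1 0 : ℝ) = 1 := by
  exact_mod_cast detZ M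

lemma detC (M : SL2Z) :
    (M.1 0 0 : ℂ) * (M.1 1 1 : ℂ) - (M.1 0 1 : ℂ) * (M.1 1 0 : ℂ) = 1 := by
  exact_mod_cast detZ M

lemma one_le_Nm (M : SL2Z) : 1 ≤ Nm M := by
  have h := detR M
  unfold Nm
  nlinarith [sq_nonneg ((M.1 0 0 : ℝ) - M.1 1 1), sq_nonneg ((M.1 0 1 : ℝ) + M.1 1 0)]

lemma norm_Lf_sq_diff (M : SL2Z) (z τ : ℂ) :
    ‖Lf M z (starRingEnd ℂ τ)‖ ^ 2 - ‖Lf M z τ‖ ^ 2 = 4 * τ.im * z.im := by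
  have h := detR M
  rw [← Complex.normSq_eq_norm_sq, ← Complex.normSq_eq_norm_sq]
  simp only [Lf, Complex.normSq_apply]
  simp
  linear_combination (4 * τ.im * z.im) * h

lemma norm_Lf_negI_sq (M : SL2Z) (z : ℂ) :
    ‖Lf M z (-Complex.I)‖ ^ 2 =
      ((M.1 1 0 : ℝ) * z.re - M.1 0 0) ^ 2 + ((M.1 1 1 : ℝ) * z.re - M.1 0 1) ^ 2 +
        ((M.1 1 0 : ℝ) ^ 2 + (M.1 1 1 : ℝ) ^ 2) * z.im ^ 2 + 2 * z.im := by
  have h := detR M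
  rw [← Complex.normSq_eq_norm_sq]
  simp only [Lf, Complex.normSq_apply]
  simp
  linear_combination (2 * z.im) * h

lemma Nm_le (M : SL2Z) (z : ℂ) (y0 : ℝ) (hy0 : 0 < y0) (hy : y0 ≤ z.im) (hx : |z.re| ≤ 1) :
    Nm M ≤ (2 + 3 / y0 ^ 2) * ‖Lf M z (-Complex.I)‖ ^ 2 := by
  rw [norm_Lf_negI_sq]
  have hx2 : z.re ^ 2 ≤ 1 := by rwa [sq_le_one_iff_abs_le_one]
  have hy2 : y0 ^ 2 ≤ z.im ^ 2 := by gcongr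
  have key : ∀ a c : ℝ, a ^ 2 + c ^ 2 ≤
      (2 + 3 / y0 ^ 2) * ((c * z.re - a) ^ 2 + c ^ 2 * z.im ^ 2) := by
    intro a c
    have h1 : a ^ 2 ≤ 2 * (c * z.re - a) ^ 2 + 2 * c ^ 2 := by
      nlinarith [sq_nonneg (2 * (c * z.re) - a), mul_le_mul_of_nonneg_left hx2 (sq_nonneg c)]
    have h2 : 3 * c ^ 2 ≤ 3 / y0 ^ 2 * (c ^ 2 * z.im ^ 2) := by
      rw [div_mul_eq_mul_div, le_div_iff₀ (by positivity)]
      nlinarith [mul_le_mul_of_nonneg_left hy2 (sq_nonneg c)]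
    have h3 : 0 ≤ 3 / y0 ^ 2 * (c * z.re - a) ^ 2 := by positivity
    nlinarith [mul_nonneg (sq_nonneg c) (sq_nonneg z.im)]
  have h4 : 0 ≤ (2 + 3 / y0 ^ 2) * (2 * z.im) := by
    have : 0 < z.im := lt_of_lt_of_le hy0 hy
    positivity
  have h5 := key (M.1 0 0) (M.1 1 0)
  have h6 := key (M.1 0 1) (M.1 1 1)
  unfold Nm
  nlinarith

lemma summable_g : Summable (fun x : ℤ => (1 + (x : ℝ) ^ 2) ^ (-(2 / 3) : ℝ)) := by
  have h := (Real.summable_abs_int_rpow (b := 4 / 3) (by norm_num))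
  have h2 : Summable (fun x : ℤ => |(x : ℝ)| ^ (-(4 / 3) : ℝ) + if x = 0 then (1 : ℝ) else 0) := by
    refine h.add ?_
    exact summable_of_ne_finset_zero (s := {0}) (by intro b hb; simp at hb; simp [hb])
  refine Summable.of_nonneg_of_le (fun x => by positivity) (fun x => ?_) h2
  rcases eq_or_ne x 0 with rfl | hx
  · simp
  · simp [hx]
    have hx' : 0 < |(x : ℝ)| := by simpa using hx
    have h1 : |(x : ℝ)| ^ (-(4 / 3) : ℝ) = (|(x : ℝ)| ^ 2) ^ (-(2 / 3) : ℝ) := by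
      rw [← Real.rpow_natCast, ← Real.rpow_mul hx'.le]; norm_num
    rw [h1]
    apply Real.rpow_le_rpow_of_nonpos (by positivity) _ (by norm_num)
    rw [sq_abs]; linarith

lemma summable_Nm : Summable (fun M : SL2Z => (Nm M ^ 2)⁻¹) := by
  let g : ℤ → ℝ := fun x => (1 + (x : ℝ) ^ 2) ^ (-(2 / 3) : ℝ)
  have hg0 : ∀ x, 0 ≤ g x := fun x => by positivity
  have hg : Summable g := summable_g
  have h2 : Summable (fun x : ℤ × ℤ => g x.1 * g x.2) := hg.mul_of_nonneg hg hg0 hg0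
  have h3 : Summable (fun x : ℤ × (ℤ × ℤ) => g x.1 * (g x.2.1 * g x.2.2)) :=
    hg.mul_of_nonneg h2 hg0 (fun x => mul_nonneg (hg0 _) (hg0 _))
  have hb : Summable (fun _ : Bool => (4 : ℝ)) := Summable.of_finite
  have h4 : Summable (fun x : Bool × (ℤ × (ℤ × ℤ)) => 4 * (g x.2.1 * (g x.2.2.1 * g x.2.2.2))) :=
    hb.mul_of_nonneg h3 (fun _ => by norm_num)
      (fun x => mul_nonneg (hg0 _) (mul_nonneg (hg0 _) (hg0 _)))
  let e : SL2Z → Bool × (ℤ × (ℤ × ℤ)) := fun M =>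
    if M.1 1 0 = 0 then (true, M.1 0 0, M.1 0 1, M.1 1 1) else (false, M.1 0 0, M.1 1 0, M.1 1 1)
  have he : Function.Injective e := by
    intro M N h
    have hM := detZ M
    have hN := detZ N
    by_cases h1 : M.1 1 0 = 0 <;> by_cases h2 : N.1 1 0 = 0
    · simp only [e, h1, h2, if_true, Prod.mk.injEq] at h
      ext i j
      fin_cases i <;> fin_cases j <;> simp_all
    · simp [e, h1, h2] at h
    · simp [e, h1, h2] at h
    · simp only [e, h1, h2, if_false, Prod.mk.injEq] at h
      obtain ⟨-, ha, hc, hd⟩ := h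
      have hbb : M.1 0 1 = N.1 0 1 := by
        have : M.1 0 1 * M.1 1 0 = N.1 0 1 * M.1 1 0 := by
          rw [ha, hd] at hM
          rw [← hc] at hN
          linarith
        exact mul_right_cancel₀ h1 this
      ext i j
      fin_cases i <;> fin_cases j <;> simp_all
  refine Summable.of_nonneg_of_le (fun M => by positivity) (fun M => ?_) (h4.comp_injective he)
  have hN := one_le_Nm M
  have key : ∀ x y z : ℝ, x ^ 2 ≤ Nm M → y ^ 2 ≤ Nm M → z ^ 2 ≤ Nm M →
      (Nm M ^ 2)⁻¹ ≤ 4 * ((1 + x ^ 2) ^ (-(2 / 3) : ℝ) * ((1 + y ^ 2) ^ (-(2 / 3) : ℝ) *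
        (1 + z ^ 2) ^ (-(2 / 3) : ℝ))) := by
    intro x y z hx hy hz
    have hB : ∀ x : ℝ, x ^ 2 ≤ Nm M → (2 * Nm M) ^ (-(2 / 3) : ℝ) ≤ (1 + x ^ 2) ^ (-(2 / 3) : ℝ) := by
      intro x hx
      exact Real.rpow_le_rpow_of_nonpos (by positivity) (by linarith) (by norm_num)
    have h5 : (Nm M ^ 2)⁻¹ = 4 * ((2 * Nm M) ^ (-(2 / 3) : ℝ) * ((2 * Nm M) ^ (-(2 / 3) : ℝ) *
        (2 * Nm M) ^ (-(2 / 3) : ℝ))) := by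
      rw [← Real.rpow_add (by positivity), ← Real.rpow_add (by positivity)]
      rw [show (-(2 / 3) + (-(2 / 3) + -(2 / 3)) : ℝ) = -((2 : ℕ) : ℝ) by norm_num,
        Real.rpow_neg (by positivity), Real.rpow_natCast, mul_pow, mul_inv]
      ring
    rw [h5]
    have p0 : 0 ≤ (2 * Nm M) ^ (-(2 / 3) : ℝ) := by positivity
    refine mul_le_mul_of_nonneg_left ?_ (by norm_num)
    refine mul_le_mul (hB x hx) ?_ (mul_nonneg p0 p0) (by positivity)
    exact mul_le_mul (hB y hy) (hB z hz) p0 (by positivity)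
  have q1 := sq_nonneg (M.1 0 0 : ℝ)
  have q2 := sq_nonneg (M.1 0 1 : ℝ)
  have q3 := sq_nonneg (M.1 1 0 : ℝ)
  have q4 := sq_nonneg (M.1 1 1 : ℝ)
  by_cases h1 : M.1 1 0 = 0
  · simp only [Function.comp, e, h1, if_true]
    apply key <;> unfold Nm <;> linarith
  · simp only [Function.comp, e, h1, if_false]
    apply key <;> unfold Nm <;> linarith


lemma jfac_ne (M : SL2Z) (τ : ℂ) (hτ : τ.im ≠ 0) : jfac M τ ≠ 0 := by
  intro h
  have h1 := congrArg Complex.im h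
  have h2 := congrArg Complex.re h
  simp [jfac] at h1 h2
  have hc : M.1 1 0 = 0 := by rcases h1 with h1 | h1 <;> [exact h1; exact absurd h1 hτ]
  have hd : M.1 1 1 = 0 := by
    rw [hc] at h2; simpa using h2
  have := detZ M
  rw [hc, hd] at this
  simp at this

lemma Lf_eq (M : SL2Z) (z τ : ℂ) (hτ : τ.im ≠ 0) : Lf M z τ = jfac M τ * (z - moeb M τ) := by
  have h := jfac_ne M τ hτ
  have h2 : jfac M τ * moeb M τ = (M.1 0 0 : ℂ) * τ + (M.1 0 1 : ℂ) := by
    unfold moeb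
    change jfac M τ * (_ / jfac M τ) = _
    field_simp
  rw [mul_sub, h2]
  rfl

lemma moeb_eq (M : SL2Z) (τ : ℂ) :
    moeb M τ = ((M.1 0 0 : ℂ) * τ + (M.1 0 1 : ℂ)) * starRingEnd ℂ (jfac M τ) *
      (((Complex.normSq (jfac M τ))⁻¹ : ℝ) : ℂ) := by
  change _ / jfac M τ = _
  rw [div_eq_mul_inv, Complex.inv_def, mul_assoc]

lemma moeb_im (M : SL2Z) (τ : ℂ) : (moeb M τ).im = τ.im / Complex.normSq (jfac M τ) := by
  rw [moeb_eq, Complex.im_mul_ofReal, div_eq_mul_inv]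
  congr 1
  simp [jfac]
  linear_combination τ.im * detR M

lemma moeb_re (M : SL2Z) (τ : ℂ) : (moeb M τ).re =
    ((M.1 0 0 : ℝ) * M.1 1 0 * Complex.normSq τ + ((M.1 0 0 : ℝ) * M.1 1 1 + M.1 0 1 * M.1 1 0) * τ.re
      + M.1 0 1 * M.1 1 1) / Complex.normSq (jfac M τ) := by
  rw [moeb_eq, Complex.re_mul_ofReal, div_eq_mul_inv]
  congr 1
  simp [jfac, Complex.normSq_apply]
  ring

lemma moeb_conj (M : SL2Z) (τ : ℂ) :
    moeb M (starRingEnd ℂ τ) = starRingEnd ℂ (moeb M τ) := by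
  simp [moeb]

lemma jfac_conj (M : SL2Z) (τ : ℂ) :
    jfac M (starRingEnd ℂ τ) = starRingEnd ℂ (jfac M τ) := by
  simp [jfac]

lemma moeb_im_le (M : SL2Z) (τ : ℂ) (hτ : 0 < τ.im) : (moeb M τ).im ≤ τ.im + 1 / τ.im := by
  rw [moeb_im]
  have hj : 0 < Complex.normSq (jfac M τ) := Complex.normSq_pos.2 (jfac_ne M τ hτ.ne')
  rw [div_le_iff₀ hj]
  have e : Complex.normSq (jfac M τ) =
      ((M.1 1 0 : ℝ) * τ.re + M.1 1 1) ^ 2 + (M.1 1 0 : ℝ) ^ 2 * τ.im ^ 2 := by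
    simp [jfac, Complex.normSq_apply]; ring
  rw [e]
  by_cases hc : M.1 1 0 = 0
  · have hd : (1 : ℝ) ≤ (M.1 1 1 : ℝ) ^ 2 := by
      have : M.1 1 1 ≠ 0 := by
        intro hd
        have := detZ M
        simp [hc, hd] at this
      have : 1 ≤ (M.1 1 1) ^ 2 := by
        have := sq_pos_of_ne_zero this
        omega
      exact_mod_cast this
    simp [hc]
    have : 0 < τ.im⁻¹ := by positivity
    nlinarith
  · have hd : (1 : ℝ) ≤ (M.1 1 0 : ℝ) ^ 2 := by
      have : 1 ≤ (M.1 1 0) ^ 2 := by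
        have := sq_pos_of_ne_zero hc
        omega
      exact_mod_cast this
    have h1 : τ.im ^ 2 ≤ ((M.1 1 0 : ℝ) * τ.re + M.1 1 1) ^ 2 + (M.1 1 0 : ℝ) ^ 2 * τ.im ^ 2 := by
      nlinarith [sq_nonneg ((M.1 1 0 : ℝ) * τ.re + M.1 1 1), sq_nonneg τ.im]
    calc τ.im = (1 / τ.im) * τ.im ^ 2 := by field_simp
      _ ≤ (τ.im + 1 / τ.im) * τ.im ^ 2 := by gcongr; linarith
      _ ≤ _ := by gcongr

/-- The points `z` we care about. -/
def good (Y : ℝ) (z : ℂ) : Prop := (z.re = 0 ∧ 0 < z.im) ∨ Y ≤ z.im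

lemma ratio_bound (z w : ℂ) (hw : 0 < w.im) (δ : ℝ) (hδ : 0 < δ) (hδ1 : δ ≤ 1)
    (h : (z.re = 0 ∧ δ * w.im ≤ |w.re|) ∨ 2 * w.im ≤ z.im) :
    (δ / 4) * ‖z - starRingEnd ℂ w‖ ≤ ‖z - w‖ := by
  apply le_of_sq_le_sq _ (norm_nonneg _)
  rw [mul_pow, ← Complex.normSq_eq_norm_sq, ← Complex.normSq_eq_norm_sq]
  simp only [Complex.normSq_apply]
  simp
  have hd2 : δ ^ 2 ≤ 1 := by nlinarith
  rcases h with ⟨h0, h1⟩ | h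
  · have h2 : δ ^ 2 * w.im ^ 2 ≤ w.re ^ 2 := by
      rw [← sq_abs w.re, ← mul_pow]
      gcongr
    rw [h0]
    have h3 : (z.im + w.im) ^ 2 ≤ 8 * w.im ^ 2 + 2 * (z.im - w.im) ^ 2 := by
      nlinarith [sq_nonneg (2 * w.im - (z.im - w.im))]
    have h4 := mul_le_mul_of_nonneg_left h3 (sq_nonneg δ)
    have h5 := mul_le_mul_of_nonneg_right hd2 (sq_nonneg (z.im - w.im))
    have h6 := mul_le_mul_of_nonneg_right hd2 (sq_nonneg w.re)
    nlinarith [sq_nonneg (z.im - w.im), sq_nonneg w.re]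
  · have h3 : (z.im + w.im) ^ 2 ≤ 9 * (z.im - w.im) ^ 2 := by nlinarith
    have h4 := mul_le_mul_of_nonneg_left h3 (sq_nonneg δ)
    have h5 := mul_le_mul_of_nonneg_right hd2 (sq_nonneg (z.im - w.im))
    have h6 := mul_le_mul_of_nonneg_right hd2 (sq_nonneg (z.re - w.re))
    nlinarith [sq_nonneg (z.im - w.im), sq_nonneg (z.re - w.re)]

lemma Lf_sub (M : SL2Z) (z τ w : ℂ) :
    Lf M z τ - Lf M z w = ((M.1 1 0 : ℂ) * z - M.1 0 0) * (τ - w) := by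
  unfold Lf; ring

lemma sep (τ0 : ℂ) (h0 : 0 < τ0.im) (ε : ℝ) (hε : 0 < ε)
    (hsep : ∀ M : SL2Z, ε * (moeb M τ0).im ≤ |(moeb M τ0).re|) :
    ∃ r > 0, r ≤ τ0.im / 2 ∧ ∃ η > 0, ∃ Y, 1 ≤ Y ∧ ∀ τ ∈ Metric.ball τ0 r, ∀ M : SL2Z, ∀ z : ℂ,
      good Y z → η * ‖Lf M z (-Complex.I)‖ ≤ ‖Lf M z τ‖ ∧
        η * ‖Lf M z (-Complex.I)‖ ≤ ‖Lf M z (starRingEnd ℂ τ)‖ := by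
  set δ : ℝ := min ε 1 / 4 with hδ
  have hm : 0 < min ε 1 := lt_min hε one_pos
  have hδ0 : 0 < δ := by positivity
  have hδ1 : δ ≤ 1 := by
    have := min_le_right ε 1
    rw [hδ]; linarith
  set K : ℝ := 1 + ‖-Complex.I - starRingEnd ℂ τ0‖ / τ0.im with hK
  have hK0 : 0 < K := by positivity
  refine ⟨δ * τ0.im / 2, by positivity, by nlinarith, δ / 2 / K, by positivity,
    max 1 (2 * (τ0.im + 1 / τ0.im)), le_max_left _ _, ?_⟩
  intro τ hτ M z hz
  have hzim : 0 < z.im := by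
    rcases hz with hz | hz
    · exact hz.2
    · exact lt_of_lt_of_le one_pos ((le_max_left _ _).trans hz)
  have hAB : δ * ‖Lf M z (starRingEnd ℂ τ0)‖ ≤ ‖Lf M z τ0‖ := by
    rw [Lf_eq M z _ (by simpa using h0.ne'), Lf_eq M z _ h0.ne', moeb_conj, jfac_conj,
      norm_mul, norm_mul, Complex.norm_conj]
    have hw : 0 < (moeb M τ0).im := by
      rw [moeb_im]
      exact div_pos h0 (Complex.normSq_pos.2 (jfac_ne M τ0 h0.ne'))
    have := ratio_bound z (moeb M τ0) hw (min ε 1) hm (min_le_right _ _) ?_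
    · calc _ = ‖jfac M τ0‖ * (δ * ‖z - starRingEnd ℂ (moeb M τ0)‖) := by ring
        _ ≤ _ := by gcongr
    · rcases hz with hz | hz
      · left
        refine ⟨hz.1, le_trans ?_ (hsep M)⟩
        gcongr
        exact min_le_left _ _
      · right
        have := moeb_im_le M τ0 h0
        have := (le_max_right _ _).trans hz
        linarith
  set B := ‖Lf M z (starRingEnd ℂ τ0)‖ with hB
  have hB0 : 0 ≤ B := norm_nonneg _
  have hle : ‖Lf M z τ0‖ ≤ B := by
    apply le_of_sq_le_sq _ hB0
    have := norm_Lf_sq_diff M z τ0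
    have : 0 < 4 * τ0.im * z.im := by positivity
    linarith
  have hcz : ‖(M.1 1 0 : ℂ) * z - M.1 0 0‖ ≤ B / τ0.im := by
    have h1 := Lf_sub M z τ0 (starRingEnd ℂ τ0)
    have h2 : ‖Lf M z τ0 - Lf M z (starRingEnd ℂ τ0)‖ ≤ 2 * B := by
      refine (norm_sub_le _ _).trans ?_
      linarith
    rw [h1, norm_mul, Complex.sub_conj] at h2
    have h3 : ‖((2 * τ0.im : ℝ) : ℂ) * Complex.I‖ = 2 * τ0.im := by
      rw [norm_mul, Complex.norm_I, Complex.norm_real, Real.norm_of_nonneg (by positivity), mul_one]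
    rw [h3] at h2
    rw [le_div_iff₀ h0]
    linarith
  have hdist : ∀ w w0 : ℂ, ‖Lf M z w - Lf M z w0‖ ≤ ‖w - w0‖ * (B / τ0.im) := by
    intro w w0
    rw [Lf_sub, norm_mul, mul_comm]
    gcongr
  have hI : ‖Lf M z (-Complex.I)‖ ≤ K * B := by
    have h1 := hdist (-Complex.I) (starRingEnd ℂ τ0)
    have h2 := norm_sub_norm_le (Lf M z (-Complex.I)) (Lf M z (starRingEnd ℂ τ0))
    have : K * B = B + ‖-Complex.I - starRingEnd ℂ τ0‖ * (B / τ0.im) := by rw [hK]; ring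
    linarith
  have hmain : δ / 2 / K * ‖Lf M z (-Complex.I)‖ ≤ δ / 2 * B := by
    calc _ ≤ δ / 2 / K * (K * B) := by gcongr
      _ = _ := by field_simp
  have hτ' : ‖τ - τ0‖ ≤ δ * τ0.im / 2 := by
    rw [Metric.mem_ball, dist_eq_norm] at hτ; exact hτ.le
  have hr : ∀ w w0 : ℂ, ‖w - w0‖ ≤ δ * τ0.im / 2 → ‖Lf M z w0‖ - ‖Lf M z w‖ ≤ δ / 2 * B := by
    intro w w0 h
    have h1 := hdist w w0
    have h2 := norm_sub_norm_le (Lf M z w0) (Lf M z w)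
    rw [norm_sub_rev] at h2
    have h3 : ‖w - w0‖ * (B / τ0.im) ≤ δ * τ0.im / 2 * (B / τ0.im) := by gcongr
    have h4 : δ * τ0.im / 2 * (B / τ0.im) = δ / 2 * B := by field_simp
    linarith
  constructor
  · have := hr τ τ0 hτ'
    linarith
  · have := hr (starRingEnd ℂ τ) (starRingEnd ℂ τ0) (by
      rw [← map_sub, Complex.norm_conj]; exact hτ')
    have : δ * B ≤ B := by nlinarith
    linarith


/-- Separation hypothesis. -/
def SepH (τ0 : ℂ) (r η Y : ℝ) : Prop :=
  0 < r ∧ r ≤ τ0.im / 2 ∧ 0 < η ∧ 1 ≤ Y ∧ ∀ τ ∈ Metric.ball τ0 r, ∀ M : SL2Z, ∀ z : ℂ,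
      good Y z → η * ‖Lf M z (-Complex.I)‖ ≤ ‖Lf M z τ‖ ∧
        η * ‖Lf M z (-Complex.I)‖ ≤ ‖Lf M z (starRingEnd ℂ τ)‖

/-- The constant in the termwise bound. -/
def Cb (k : ℕ) (η y0 : ℝ) : ℝ := ((2 + 3 / y0 ^ 2) / η ^ 2) ^ k

lemma good_im {Y : ℝ} (hY : 1 ≤ Y) {z : ℂ} (hz : good Y z) : 0 < z.im := by
  rcases hz with hz | hz
  · exact hz.2
  · linarith

lemma norm_Lf_negI_pos (M : SL2Z) (z : ℂ) (hz : 0 < z.im) : 0 < ‖Lf M z (-Complex.I)‖ := by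
  have h := norm_Lf_negI_sq M z
  have : 0 < ‖Lf M z (-Complex.I)‖ ^ 2 := by rw [h]; positivity
  by_contra hc
  have h0 : ‖Lf M z (-Complex.I)‖ = 0 := le_antisymm (not_lt.1 hc) (norm_nonneg _)
  rw [h0] at this
  norm_num at this

lemma tf_bound0 {τ0 : ℂ} {r η Y : ℝ} (h : SepH τ0 r η Y) (k p : ℕ) (hp : p ≤ 2 * k)
    (τ : ℂ) (hτ : τ ∈ Metric.ball τ0 r) (M : SL2Z) (z : ℂ) (hz : good Y z) :
    ‖tf k p M z τ‖ ≤ ((η ^ 2 * ‖Lf M z (-Complex.I)‖ ^ 2) ^ k)⁻¹ := by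
  obtain ⟨hr, hr2, hη, hY, hL⟩ := h
  obtain ⟨h1, h2⟩ := hL τ hτ M z hz
  have hpos := norm_Lf_negI_pos M z (good_im hY hz)
  set ℓ := ‖Lf M z (-Complex.I)‖
  have hηl : 0 < η * ℓ := by positivity
  unfold tf
  rw [norm_mul, norm_pow, norm_pow, norm_inv, norm_inv]
  calc _ ≤ (η * ℓ)⁻¹ ^ p * (η * ℓ)⁻¹ ^ (2 * k - p) := by gcongr
    _ = (η * ℓ)⁻¹ ^ (2 * k) := by rw [← pow_add]; congr 1; omega
    _ = _ := by rw [inv_pow, pow_mul, mul_pow]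

lemma tf_bound {τ0 : ℂ} {r η Y : ℝ} (h : SepH τ0 r η Y) (k p : ℕ) (hk : 2 ≤ k) (hp : p ≤ 2 * k)
    (τ : ℂ) (hτ : τ ∈ Metric.ball τ0 r) (M : SL2Z) (z : ℂ) (hz : good Y z)
    (y0 : ℝ) (hy0 : 0 < y0) (hy : y0 ≤ z.im) (hx : |z.re| ≤ 1) :
    ‖tf k p M z τ‖ ≤ Cb k η y0 * (Nm M ^ 2)⁻¹ := by
  refine (tf_bound0 h k p hp τ hτ M z hz).trans ?_
  obtain ⟨hr, hr2, hη, hY, hL⟩ := h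
  have hN := one_le_Nm M
  have h1 := Nm_le M z y0 hy0 hy hx
  set ℓ := ‖Lf M z (-Complex.I)‖
  set c := 2 + 3 / y0 ^ 2
  have hc : 0 < c := by positivity
  have h3 : Nm M / (c / η ^ 2) ≤ η ^ 2 * ℓ ^ 2 := by
    rw [div_le_iff₀ (by positivity)]
    calc _ ≤ _ := h1
      _ = _ := by field_simp
  calc ((η ^ 2 * ℓ ^ 2) ^ k)⁻¹ ≤ ((Nm M / (c / η ^ 2)) ^ k)⁻¹ := by gcongr
    _ = (c / η ^ 2) ^ k * (Nm M ^ k)⁻¹ := by rw [div_pow, inv_div, div_eq_mul_inv]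
    _ ≤ _ := by
      unfold Cb
      gcongr

lemma tf_summable {τ0 : ℂ} {r η Y : ℝ} (h : SepH τ0 r η Y) (k p : ℕ) (hk : 2 ≤ k)
    (hp : p ≤ 2 * k) (τ : ℂ) (hτ : τ ∈ Metric.ball τ0 r) (z : ℂ) (hz : good Y z)
    (hx : |z.re| ≤ 1) : Summable (fun M => tf k p M z τ) := by
  refine Summable.of_norm_bounded (summable_Nm.mul_left (Cb k η z.im)) (fun M => ?_)
  exact tf_bound h k p hk hp τ hτ M z hz _ (good_im h.2.2.2.1 hz) le_rfl hx

lemma Af_bound {τ0 : ℂ} {r η Y : ℝ} (h : SepH τ0 r η Y) (k p : ℕ) (hk : 2 ≤ k) (hp : p ≤ 2 * k)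
    (τ : ℂ) (hτ : τ ∈ Metric.ball τ0 r) (z : ℂ) (hz : good Y z)
    (hy : 1 ≤ z.im) (hx : |z.re| ≤ 1) :
    ‖Af k p z τ‖ ≤ Cb k η 1 * ∑' M : SL2Z, (Nm M ^ 2)⁻¹ := by
  rw [← tsum_mul_left]
  exact tsum_of_norm_bounded (summable_Nm.mul_left _).hasSum
    (fun M => tf_bound h k p hk hp τ hτ M z hz 1 one_pos hy hx)

lemma Af_periodic (k p : ℕ) (τ : ℂ) : Function.Periodic (fun z => Af k p z τ) ((1 : ℝ) : ℂ) := by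
  intro z
  unfold Af
  beta_reduce
  rw [← (Equiv.mulLeft (ModularGroup.T⁻¹)).tsum_eq (fun M => tf k p M z τ)]
  refine tsum_congr (fun M => ?_)
  have : ∀ w, Lf ((ModularGroup.T⁻¹) * M) z w = Lf M (z + ((1 : ℝ) : ℂ)) w := by
    intro w
    simp [Lf, ModularGroup.coe_T_inv, Matrix.mul_apply, Fin.sum_univ_two,
      Matrix.SpecialLinearGroup.coe_mul]
    ring
  simp only [Equiv.coe_mulLeft, tf, this]

lemma Af_S (k p : ℕ) (hp : p ≤ 2 * k) (z τ : ℂ) (hz : z ≠ 0) :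
    Af k p (-z⁻¹) τ = z ^ (2 * k) * Af k p z τ := by
  unfold Af
  rw [← (Equiv.mulLeft ModularGroup.S).tsum_eq (fun M => tf k p M z τ), ← tsum_mul_left]
  refine tsum_congr (fun M => ?_)
  have : ∀ w, Lf M (-z⁻¹) w = -z⁻¹ * Lf (ModularGroup.S * M) z w := by
    intro w
    simp [Lf, ModularGroup.coe_S, Matrix.mul_apply, Fin.sum_univ_two,
      Matrix.SpecialLinearGroup.coe_mul]
    field_simp
    ring
  simp only [Equiv.coe_mulLeft, tf, this]
  rw [mul_inv, mul_inv, mul_pow, mul_pow]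
  have e : z ^ (2 * k) = (-z⁻¹)⁻¹ ^ p * (-z⁻¹)⁻¹ ^ (2 * k - p) := by
    rw [← pow_add, Nat.add_sub_cancel' hp]
    rw [inv_neg, inv_inv, neg_pow, pow_mul (-1 : ℂ)]
    simp
  rw [e]; ring

lemma schwarz_cusp (f : ℂ → ℂ) (hf : Function.Periodic f ((1 : ℝ) : ℂ)) (Y C : ℝ)
    (hd : ∀ z : ℂ, Y < z.im → DifferentiableAt ℂ f z) (hb : ∀ z : ℂ, Y < z.im → ‖f z‖ ≤ C)
    (h0 : Filter.Tendsto (fun y : ℝ => f ((y : ℂ) * Complex.I)) Filter.atTop (nhds 0))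
    (z : ℂ) (hz : Y < z.im) : ‖f z‖ ≤ C * Real.exp (-2 * π * (z.im - Y)) := by
  set g := Function.Periodic.cuspFunction 1 f with hg
  set R := Real.exp (-2 * π * Y / 1) with hR
  have hev : ∀ᶠ z in Filter.comap Complex.im Filter.atTop, Y < z.im :=
    Filter.tendsto_comap.eventually (Filter.eventually_gt_atTop Y)
  have hbd : Filter.BoundedAtFilter (Filter.comap Complex.im Filter.atTop) f := by
    refine Asymptotics.IsBigO.of_bound C ?_
    filter_upwards [hev] with w hw
    simpa using hb w hw
  have hhol : ∀ᶠ z in Filter.comap Complex.im Filter.atTop, DifferentiableAt ℂ f z :=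
    hev.mono hd
  have hg0 : g 0 = 0 := by
    have h1 := Function.Periodic.tendsto_at_I_inf one_pos hf hhol hbd
    have h2 : Filter.Tendsto (fun y : ℝ => (y : ℂ) * Complex.I) Filter.atTop
        (Filter.comap Complex.im Filter.atTop) := by
      rw [Filter.tendsto_comap_iff]
      refine Filter.tendsto_id.congr (fun y => by simp)
    exact tendsto_nhds_unique (h1.comp h2) h0
  have hC : 0 ≤ C := (norm_nonneg _).trans (hb z hz)
  have hqim : ∀ q ∈ Metric.ball (0 : ℂ) R, q ≠ 0 → Y < (Function.Periodic.invQParam 1 q).im := by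
    intro q hq hq0
    rw [← Function.Periodic.norm_qParam_lt_iff one_pos, Function.Periodic.qParam_right_inv one_ne_zero hq0]
    exact mem_ball_zero_iff.1 hq
  have hdg : DifferentiableOn ℂ g (Metric.ball 0 R) := by
    intro q hq
    apply DifferentiableAt.differentiableWithinAt
    rcases eq_or_ne q 0 with rfl | hq0
    · exact Function.Periodic.differentiableAt_cuspFunction_zero one_pos hf hhol hbd
    · have := Function.Periodic.differentiableAt_cuspFunction one_ne_zero hf (hd _ (hqim q hq hq0))
      rwa [Function.Periodic.qParam_right_inv one_ne_zero hq0] at this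
  have hmaps : Set.MapsTo g (Metric.ball 0 R) (Metric.closedBall (g 0) C) := by
    intro q hq
    rw [hg0, mem_closedBall_zero_iff]
    rcases eq_or_ne q 0 with rfl | hq0
    · rw [hg0]; simpa using hC
    · rw [hg, Function.Periodic.cuspFunction_eq_of_nonzero _ _ hq0]
      exact hb _ (hqim q hq hq0)
  have hqz : Function.Periodic.qParam 1 z ∈ Metric.ball (0 : ℂ) R := by
    rw [mem_ball_zero_iff]
    exact (Function.Periodic.norm_qParam_lt_iff one_pos Y z).2 hz
  have := Complex.dist_le_div_mul_dist_of_mapsTo_ball hdg hmaps hqz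
  rw [hg0, dist_zero_right, dist_zero_right, Function.Periodic.norm_qParam, hg,
    Function.Periodic.eq_cuspFunction one_ne_zero hf] at this
  refine this.trans (le_of_eq ?_)
  rw [hR, div_mul_eq_mul_div, mul_div_assoc, ← Real.exp_sub]
  congr 2
  ring


lemma Lf_ne {τ0 : ℂ} {r η Y : ℝ} (h : SepH τ0 r η Y) (τ : ℂ) (hτ : τ ∈ Metric.ball τ0 r)
    (M : SL2Z) (z : ℂ) (hz : good Y z) : Lf M z τ ≠ 0 ∧ Lf M z (starRingEnd ℂ τ) ≠ 0 := by
  obtain ⟨hr, hr2, hη, hY, hL⟩ := h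
  obtain ⟨h1, h2⟩ := hL τ hτ M z hz
  have hpos := mul_pos hη (norm_Lf_negI_pos M z (good_im hY hz))
  exact ⟨norm_pos_iff.1 (hpos.trans_le h1), norm_pos_iff.1 (hpos.trans_le h2)⟩

lemma differentiable_Lf (M : SL2Z) (τ : ℂ) : Differentiable ℂ (fun z => Lf M z τ) := by
  unfold Lf; fun_prop

lemma tf_differentiableAt {τ0 : ℂ} {r η Y : ℝ} (h : SepH τ0 r η Y) (k p : ℕ)
    (τ : ℂ) (hτ : τ ∈ Metric.ball τ0 r) (M : SL2Z) (z : ℂ) (hz : good Y z) :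
    DifferentiableAt ℂ (fun z => tf k p M z τ) z := by
  obtain ⟨h1, h2⟩ := Lf_ne h τ hτ M z hz
  unfold tf
  exact (((differentiable_Lf M τ z).inv h1).pow p).mul
    (((differentiable_Lf M _ z).inv h2).pow _)

lemma shift_re (z : ℂ) : |(z - ((round z.re : ℤ) : ℂ)).re| ≤ 1 / 2 := by
  simpa using abs_sub_round z.re

lemma Af_shift (k p : ℕ) (τ z : ℂ) (m : ℤ) : Af k p (z - (m : ℂ)) τ = Af k p z τ := by
  have := (Af_periodic k p τ).sub_int_mul_eq m (x := z)
  simpa using this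

lemma Af_differentiableAt {τ0 : ℂ} {r η Y : ℝ} (h : SepH τ0 r η Y) (k p : ℕ) (hk : 2 ≤ k)
    (hp : p ≤ 2 * k) (τ : ℂ) (hτ : τ ∈ Metric.ball τ0 r) (z : ℂ) (hz : Y < z.im) :
    DifferentiableAt ℂ (fun z => Af k p z τ) z := by
  have hY := h.2.2.2.1
  let U : Set ℂ := {w | Y < w.im} ∩ {w | |w.re| < 1}
  have hU : IsOpen U := (isOpen_lt continuous_const Complex.continuous_im).inter
    (isOpen_lt (Complex.continuous_re.abs) continuous_const)
  have hd : DifferentiableOn ℂ (fun w => ∑' M : SL2Z, tf k p M w τ) U := by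
    refine differentiableOn_tsum_of_summable_norm (summable_Nm.mul_left (Cb k η 1)) ?_ hU ?_
    · intro M w hw
      exact (tf_differentiableAt h k p τ hτ M w (Or.inr (le_of_lt hw.1))).differentiableWithinAt
    · intro M w hw
      exact tf_bound h k p hk hp τ hτ M w (Or.inr (le_of_lt hw.1)) 1 one_pos
        (hY.trans (le_of_lt hw.1)) (le_of_lt hw.2)
  have hmem : z - ((round z.re : ℤ) : ℂ) ∈ U := by
    refine ⟨by simpa using hz, ?_⟩
    have := shift_re z
    change |(z - ((round z.re : ℤ) : ℂ)).re| < 1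
    linarith
  have h1 : DifferentiableAt ℂ (fun z => Af k p z τ) (z - ((round z.re : ℤ) : ℂ)) :=
    hd.differentiableAt (hU.mem_nhds hmem)
  have h2 : (fun z => Af k p z τ) = (fun w => Af k p w τ) ∘ fun w => w - ((round z.re : ℤ) : ℂ) := by
    funext w
    exact (Af_shift k p τ w _).symm
  rw [h2]
  exact h1.comp z (differentiableAt_id.sub_const _)

lemma Af_tendsto {τ0 : ℂ} {r η Y : ℝ} (h : SepH τ0 r η Y) (k p : ℕ) (hk : 2 ≤ k)
    (hp : p ≤ 2 * k) (τ : ℂ) (hτ : τ ∈ Metric.ball τ0 r) :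
    Filter.Tendsto (fun y : ℝ => Af k p ((y : ℂ) * Complex.I) τ) Filter.atTop (nhds 0) := by
  have hη := h.2.2.1
  have hgood : ∀ y : ℝ, 1 ≤ y → good Y ((y : ℂ) * Complex.I) := fun y hy =>
    Or.inl ⟨by simp, by simpa using lt_of_lt_of_le one_pos hy⟩
  have key := tendsto_tsum_of_dominated_convergence (𝓕 := Filter.atTop)
    (f := fun (y : ℝ) (M : SL2Z) => tf k p M ((y : ℂ) * Complex.I) τ) (g := fun _ => (0 : ℂ))
    (bound := fun M => Cb k η 1 * (Nm M ^ 2)⁻¹) (summable_Nm.mul_left _) ?_ ?_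
  · simpa [Af] using key
  · intro M
    have h1 : Filter.Tendsto (fun y : ℝ => ((η ^ 2 * (2 * y)) ^ k)⁻¹) Filter.atTop (nhds 0) := by
      refine Filter.Tendsto.inv_tendsto_atTop ?_
      refine (Filter.tendsto_pow_atTop (by omega)).comp ?_
      refine Filter.Tendsto.const_mul_atTop (by positivity) ?_
      exact Filter.Tendsto.const_mul_atTop (by norm_num) Filter.tendsto_id
    refine squeeze_zero_norm' ?_ h1
    filter_upwards [Filter.eventually_ge_atTop 1] with y hy
    refine (tf_bound0 h k p hp τ hτ M _ (hgood y hy)).trans ?_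
    have h2 := norm_Lf_negI_sq M ((y : ℂ) * Complex.I)
    gcongr
    rw [h2]
    simp
    positivity
  · filter_upwards [Filter.eventually_ge_atTop 1] with y hy
    intro M
    exact tf_bound h k p hk hp τ hτ M _ (hgood y hy) 1 one_pos (by simpa using hy) (by simp)

/-- The constant in the decay bound. -/
def Cd (k : ℕ) (η Y : ℝ) : ℝ :=
  Cb k η 1 * (∑' M : SL2Z, (Nm M ^ 2)⁻¹) * Real.exp (2 * π * Y) * (Nat.factorial (2 * k) : ℝ)

lemma Cd_nonneg (k : ℕ) (η Y : ℝ) : 0 ≤ Cd k η Y := by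
  have : 0 ≤ ∑' M : SL2Z, (Nm M ^ 2)⁻¹ := tsum_nonneg (fun M => by positivity)
  unfold Cd Cb
  positivity

lemma Af_decay {τ0 : ℂ} {r η Y : ℝ} (h : SepH τ0 r η Y) (k p : ℕ) (hk : 2 ≤ k)
    (hp : p ≤ 2 * k) (τ : ℂ) (hτ : τ ∈ Metric.ball τ0 r) (y : ℝ) (hy : 1 ≤ y) :
    ‖Af k p ((y : ℂ) * Complex.I) τ‖ ≤ Cd k η Y * (y ^ (2 * k))⁻¹ := by
  have hY := h.2.2.2.1
  have hη := h.2.2.1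
  set C := Cb k η 1 * ∑' M : SL2Z, (Nm M ^ 2)⁻¹ with hC
  have hC0 : 0 ≤ C := by
    have : 0 ≤ ∑' M : SL2Z, (Nm M ^ 2)⁻¹ := tsum_nonneg (fun M => by positivity)
    rw [hC]; unfold Cb
    positivity
  have h1 : ‖Af k p ((y : ℂ) * Complex.I) τ‖ ≤ C * Real.exp (-2 * π * (y - Y)) := by
    rcases le_or_gt y Y with hyY | hyY
    · refine (Af_bound h k p hk hp τ hτ _ (Or.inl ⟨by simp, by simp; linarith⟩) (by simpa using hy)
        (by simp)).trans ?_
      refine le_mul_of_one_le_right hC0 (Real.one_le_exp ?_)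
      nlinarith [Real.pi_pos]
    · have := schwarz_cusp (fun z => Af k p z τ) (Af_periodic k p τ) Y C
        (fun z hz => Af_differentiableAt h k p hk hp τ hτ z hz) ?_ (Af_tendsto h k p hk hp τ hτ)
        ((y : ℂ) * Complex.I) (by simpa using hyY)
      · simpa using this
      · intro z hz
        beta_reduce
        rw [← Af_shift k p τ z (round z.re)]
        have := shift_re z
        exact Af_bound h k p hk hp τ hτ _ (Or.inr (by simpa using hz.le))
          (by simpa using hY.trans hz.le) (by linarith)
  refine h1.trans ?_
  have h2 : y ^ (2 * k) ≤ (Nat.factorial (2 * k) : ℝ) * Real.exp (2 * π * y) := by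
    have h3 := Real.pow_div_factorial_le_exp (2 * π * y) (by positivity) (2 * k)
    rw [div_le_iff₀ (by positivity)] at h3
    calc y ^ (2 * k) ≤ (2 * π * y) ^ (2 * k) := by
          gcongr
          nlinarith [Real.pi_gt_three]
      _ ≤ _ := by linarith
  have hypos : 0 < y ^ (2 * k) := by positivity
  rw [← div_eq_mul_inv, le_div_iff₀ hypos]
  have e : Real.exp (-2 * π * (y - Y)) = Real.exp (2 * π * Y) * (Real.exp (2 * π * y))⁻¹ := by
    rw [← Real.exp_neg, ← Real.exp_add]; congr 1; ring
  rw [e]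
  calc C * (Real.exp (2 * π * Y) * (Real.exp (2 * π * y))⁻¹) * y ^ (2 * k)
      ≤ C * (Real.exp (2 * π * Y) * (Real.exp (2 * π * y))⁻¹) *
        ((Nat.factorial (2 * k) : ℝ) * Real.exp (2 * π * y)) := by gcongr
    _ = Cd k η Y := by
      unfold Cd
      rw [← hC]
      field_simp

lemma Af_int_bound {τ0 : ℂ} {r η Y : ℝ} (h : SepH τ0 r η Y) (k n p : ℕ) (hk : 2 ≤ k)
    (hn : n ≤ 2 * k - 2) (hp : p ≤ 2 * k) (τ : ℂ) (hτ : τ ∈ Metric.ball τ0 r) (y : ℝ) (hy : 0 < y) :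
    ‖Af k p ((y : ℂ) * Complex.I) τ * (y : ℂ) ^ n‖ ≤ 2 * Cd k η Y * (1 + y ^ 2)⁻¹ := by
  have hC := Cd_nonneg k η Y
  rw [norm_mul, norm_pow, Complex.norm_real, Real.norm_of_nonneg hy.le]
  rw [← div_eq_mul_inv, le_div_iff₀ (by positivity)]
  rcases le_total 1 y with h1 | h1
  · have h2 := Af_decay h k p hk hp τ hτ y h1
    have h3 : (y ^ (2 * k))⁻¹ * y ^ n * (1 + y ^ 2) ≤ 2 := by
      rw [mul_assoc, inv_mul_le_iff₀ (by positivity)]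
      have h4 : y ^ n ≤ y ^ (2 * k - 2) := pow_le_pow_right₀ h1 hn
      have h5 : y ^ (2 * k) = y ^ (2 * k - 2) * y ^ 2 := by rw [← pow_add]; congr 1; omega
      rw [h5]
      have h6 : 1 + y ^ 2 ≤ 2 * y ^ 2 := by nlinarith
      calc _ ≤ y ^ (2 * k - 2) * (2 * y ^ 2) := by gcongr
        _ = _ := by ring
    calc _ ≤ Cd k η Y * (y ^ (2 * k))⁻¹ * y ^ n * (1 + y ^ 2) := by gcongr
      _ = Cd k η Y * ((y ^ (2 * k))⁻¹ * y ^ n * (1 + y ^ 2)) := by ring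
      _ ≤ Cd k η Y * 2 := by gcongr
      _ = _ := by ring
  · have hinv : 1 ≤ y⁻¹ := (one_le_inv₀ hy).2 h1
    have h2 := Af_decay h k p hk hp τ hτ y⁻¹ hinv
    have hyI : (y : ℂ) * Complex.I ≠ 0 := by simp [hy.ne']
    have h3 := Af_S k p hp ((y : ℂ) * Complex.I) τ hyI
    have h4 : -((y : ℂ) * Complex.I)⁻¹ = ((y⁻¹ : ℝ) : ℂ) * Complex.I := by
      rw [mul_inv, Complex.inv_I]; push_cast; ring
    rw [h4] at h3
    rw [h3, norm_mul, norm_pow, norm_mul, Complex.norm_I, Complex.norm_real,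
      Real.norm_of_nonneg hy.le, mul_one, inv_pow, inv_inv, mul_comm (Cd k η Y)] at h2
    have h5 := le_of_mul_le_mul_left h2 (by positivity)
    have h6 : y ^ n ≤ 1 := pow_le_one₀ hy.le h1
    have h7 : 1 + y ^ 2 ≤ 2 := by nlinarith
    calc _ ≤ Cd k η Y * 1 * 2 := by gcongr
      _ = _ := by ring


/-- The real-linear map `h ↦ X h + Y conj h`. -/
def Dm (X Y : ℂ) : ℂ →L[ℝ] ℂ :=
  X • (ContinuousLinearMap.id ℝ ℂ) + Y • (Complex.conjCLE : ℂ →L[ℝ] ℂ)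

lemma Dm_apply (X Y h : ℂ) : Dm X Y h = X * h + Y * starRingEnd ℂ h := by
  simp [Dm]

lemma Dm_norm (X Y : ℂ) : ‖Dm X Y‖ ≤ ‖X‖ + ‖Y‖ := by
  refine ContinuousLinearMap.opNorm_le_bound _ (by positivity) (fun h => ?_)
  rw [Dm_apply]
  refine (norm_add_le _ _).trans ?_
  rw [norm_mul, norm_mul, Complex.norm_conj]
  exact (by ring : ‖X‖ * ‖h‖ + ‖Y‖ * ‖h‖ = (‖X‖ + ‖Y‖) * ‖h‖).le

lemma Dm_hasSum {ι : Type*} {X Y : ι → ℂ} {x y : ℂ} (hX : HasSum X x) (hY : HasSum Y y) :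
    HasSum (fun i => Dm (X i) (Y i)) (Dm x y) :=
  (hX.smul_const _).add (hY.smul_const _)

/-- Coefficients of the derivative. -/
def cX (p : ℕ) (v : ℝ) : ℂ := -(p : ℂ) / (2 * Complex.I * v)

lemma inv_pow_hasDerivAt (M : SL2Z) (z w : ℂ) (hw : Lf M z w ≠ 0) (q : ℕ) :
    HasDerivAt (fun w => (Lf M z w)⁻¹ ^ (q + 1))
      (-((q : ℂ) + 1) * ((M.1 1 0 : ℂ) * z - M.1 0 0) * (Lf M z w)⁻¹ ^ (q + 2)) w := by
  have h1 : HasDerivAt (fun w => Lf M z w) ((M.1 1 0 : ℂ) * z - M.1 0 0) w := by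
    unfold Lf
    have := ((((hasDerivAt_id w).const_mul (M.1 1 0 : ℂ)).add_const (M.1 1 1 : ℂ)).mul_const z).fun_sub
      (((hasDerivAt_id w).const_mul (M.1 0 0 : ℂ)).add_const (M.1 0 1 : ℂ))
    simp only [mul_one, id_eq] at this
    exact this
  have h2 := (h1.fun_inv hw).fun_pow (q + 1)
  refine h2.congr_deriv ?_
  simp only [Nat.add_sub_cancel]
  push_cast
  rw [div_eq_mul_inv, ← inv_pow]
  ring

lemma tf_hasFDerivAt (k p : ℕ) (hp1 : 1 ≤ p) (hp2 : p + 1 ≤ 2 * k) (M : SL2Z) (z τ : ℂ)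
    (hv : τ.im ≠ 0) (h1 : Lf M z τ ≠ 0) (h2 : Lf M z (starRingEnd ℂ τ) ≠ 0) :
    HasFDerivAt (𝕜 := ℝ) (fun τ => tf k p M z τ)
      (Dm (cX p τ.im * (tf k p M z τ - tf k (p + 1) M z τ))
        (cX (2 * k - p) τ.im * (tf k (p - 1) M z τ - tf k p M z τ))) τ := by
  obtain ⟨q, rfl⟩ : ∃ q, p = q + 1 := ⟨p - 1, by omega⟩
  obtain ⟨s, hs⟩ : ∃ s, 2 * k - (q + 1) = s + 1 := ⟨2 * k - (q + 1) - 1, by omega⟩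
  have hs2 : 2 * k - (q + 1 + 1) = s := by omega
  have hs3 : 2 * k - q = s + 2 := by omega
  have hG := (inv_pow_hasDerivAt M z τ h1 q).complexToReal_fderiv
  have hH := (inv_pow_hasDerivAt M z _ h2 s).complexToReal_fderiv
  have hH2 := HasFDerivAt.comp τ hH (Complex.conjCLE : ℂ →L[ℝ] ℂ).hasFDerivAt
  have hm := hG.mul hH2
  have e : (fun τ => tf k (q + 1) M z τ) = (fun w => (Lf M z w)⁻¹ ^ (q + 1)) *
      ((fun w => (Lf M z w)⁻¹ ^ (s + 1)) ∘ (Complex.conjCLE : ℂ →L[ℝ] ℂ)) := by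
    funext w
    simp [tf, hs]
  rw [e]
  refine hm.congr_fderiv ?_
  have hv' : (τ.im : ℂ) ≠ 0 := by exact_mod_cast hv
  have hd : Lf M z τ - Lf M z (starRingEnd ℂ τ) =
      ((M.1 1 0 : ℂ) * z - M.1 0 0) * (2 * Complex.I * τ.im) := by
    rw [Lf_sub, Complex.sub_conj]; push_cast; ring
  ext1 h
  simp only [Dm_apply, tf, hs, hs2, hs3, cX, Nat.add_sub_cancel]
  simp
  set A := Lf M z τ
  set B := Lf M z (starRingEnd ℂ τ)
  set u := (M.1 1 0 : ℂ) * z - M.1 0 0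
  have hI := Complex.I_ne_zero
  have hu : u = (A - B) / (2 * Complex.I * τ.im) := by
    rw [hd]; field_simp
  rw [hu]
  field_simp
  ring

lemma SepH.im_ge {τ0 : ℂ} {r η Y : ℝ} (h : SepH τ0 r η Y) {τ : ℂ} (hτ : τ ∈ Metric.ball τ0 r) :
    τ0.im / 2 ≤ τ.im := by
  have h1 := Complex.abs_im_le_norm (τ - τ0)
  rw [Metric.mem_ball, dist_eq_norm] at hτ
  have h2 := h.2.1
  rw [Complex.sub_im] at h1
  have := (abs_le.1 h1).1
  linarith

lemma SepH.im0_pos {τ0 : ℂ} {r η Y : ℝ} (h : SepH τ0 r η Y) : 0 < τ0.im := by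
  have h1 := h.1
  have h2 := h.2.1
  linarith

lemma cX_norm {τ0 : ℂ} {r η Y : ℝ} (h : SepH τ0 r η Y) {τ : ℂ} (hτ : τ ∈ Metric.ball τ0 r)
    (k p : ℕ) (hp : p ≤ 2 * k) : ‖cX p τ.im‖ ≤ 2 * k / τ0.im := by
  have h1 := h.im_ge hτ
  have h0 := h.im0_pos
  have h2 : 0 < τ.im := by linarith
  have h3 : (p : ℝ) ≤ 2 * k := by exact_mod_cast hp
  unfold cX
  rw [norm_div, norm_neg, norm_mul, norm_mul, Complex.norm_I, Complex.norm_real,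
    Real.norm_of_nonneg h2.le, Complex.norm_natCast]
  simp only [Complex.norm_ofNat, mul_one]
  gcongr
  linarith

lemma Dm_bound (X1 X2 c1 t1 t2 t3 : ℂ) (B C : ℝ) (hX1 : ‖X1‖ ≤ C) (hX2 : ‖X2‖ ≤ C)
    (hc : c1 = t2) (h1 : ‖t1‖ ≤ B) (h2 : ‖t2‖ ≤ B) (h3 : ‖t3‖ ≤ B) :
    ‖Dm (X1 * (c1 - t3)) (X2 * (t1 - t2))‖ ≤ C * 4 * B := by
  subst hc
  refine (Dm_norm _ _).trans ?_
  rw [norm_mul, norm_mul]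
  have hC : 0 ≤ C := (norm_nonneg _).trans hX1
  have e1 : ‖c1 - t3‖ ≤ 2 * B := (norm_sub_le _ _).trans (by linarith)
  have e2 : ‖t1 - c1‖ ≤ 2 * B := (norm_sub_le _ _).trans (by linarith)
  calc _ ≤ C * (2 * B) + C * (2 * B) := by gcongr
    _ = _ := by ring

lemma good_yI (Y y : ℝ) (hy : 0 < y) : good Y ((y : ℂ) * Complex.I) :=
  Or.inl ⟨by simp, by simpa using hy⟩

lemma Af_hasFDerivAt {τ0 : ℂ} {r η Y : ℝ} (h : SepH τ0 r η Y) (k p : ℕ) (hk : 2 ≤ k)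
    (hp1 : 1 ≤ p) (hp2 : p + 1 ≤ 2 * k) (y : ℝ) (hy : 0 < y) (τ : ℂ) (hτ : τ ∈ Metric.ball τ0 r) :
    HasFDerivAt (𝕜 := ℝ) (fun τ => Af k p ((y : ℂ) * Complex.I) τ)
      (Dm (cX p τ.im * (Af k p ((y : ℂ) * Complex.I) τ - Af k (p + 1) ((y : ℂ) * Complex.I) τ))
        (cX (2 * k - p) τ.im *
          (Af k (p - 1) ((y : ℂ) * Complex.I) τ - Af k p ((y : ℂ) * Complex.I) τ))) τ := by
  set z : ℂ := (y : ℂ) * Complex.I with hz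
  have hg : good Y z := good_yI Y y hy
  have hre : |z.re| ≤ 1 := by simp [hz]
  have him : y ≤ z.im := by simp [hz]
  have hb : ∀ q ≤ 2 * k, ∀ M, ∀ w ∈ Metric.ball τ0 r, ‖tf k q M z w‖ ≤ Cb k η y * (Nm M ^ 2)⁻¹ :=
    fun q hq M w hw => tf_bound h k q hk hq w hw M z hg y hy him hre
  have hsum : ∀ q ≤ 2 * k, HasSum (fun M => tf k q M z τ) (Af k q z τ) :=
    fun q hq => (tf_summable h k q hk hq τ hτ z hg hre).hasSum
  have key := hasFDerivAt_tsum_of_isPreconnected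
    (u := fun M : SL2Z => 2 * k / τ0.im * 4 * (Cb k η y * (Nm M ^ 2)⁻¹))
    (f := fun M w => tf k p M z w)
    (f' := fun M w => Dm (cX p w.im * (tf k p M z w - tf k (p + 1) M z w))
        (cX (2 * k - p) w.im * (tf k (p - 1) M z w - tf k p M z w)))
    (s := Metric.ball τ0 r) (x₀ := τ) (x := τ) (𝕜 := ℝ)
    ((summable_Nm.mul_left _).mul_left _) Metric.isOpen_ball
    (convex_ball τ0 r).isPreconnected
    (fun M w hw => by
      have h1 := h.im_ge hw
      have h0 := h.im0_pos
      have hne := Lf_ne h w hw M z hg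
      exact tf_hasFDerivAt k p hp1 hp2 M z w (by linarith) hne.1 hne.2)
    (fun M w hw => Dm_bound _ _ _ _ _ _ _ _ (cX_norm h hw k p (by omega))
      (cX_norm h hw k _ (by omega)) rfl (hb _ (by omega) M w hw) (hb _ (by omega) M w hw)
      (hb _ (by omega) M w hw))
    hτ (hsum p (by omega)).summable hτ
  refine key.congr_fderiv ?_
  exact (Dm_hasSum (((hsum p (by omega)).sub (hsum (p + 1) (by omega))).mul_left _)
    (((hsum (p - 1) (by omega)).sub (hsum p (by omega))).mul_left _)).tsum_eq

lemma Af_continuousOn {τ0 : ℂ} {r η Y : ℝ} (h : SepH τ0 r η Y) (k p : ℕ) (hk : 2 ≤ k)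
    (hp : p ≤ 2 * k) (τ : ℂ) (hτ : τ ∈ Metric.ball τ0 r) :
    ContinuousOn (fun y : ℝ => Af k p ((y : ℂ) * Complex.I) τ) (Set.Ioi 0) := by
  intro y hy
  have hy' : 0 < y := hy
  have hc : ContinuousOn (fun y : ℝ => Af k p ((y : ℂ) * Complex.I) τ) (Set.Ioi (y / 2)) := by
    refine continuousOn_tsum (u := fun M : SL2Z => Cb k η (y / 2) * (Nm M ^ 2)⁻¹) ?_
      (summable_Nm.mul_left _) ?_
    · intro M x hx
      have hx' : y / 2 < x := hx
      have h1 := (tf_differentiableAt h k p τ hτ M _ (good_yI Y x (by linarith))).continuousAt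
      have h2 : ContinuousAt (fun x : ℝ => (x : ℂ) * Complex.I) x := by fun_prop
      exact (ContinuousAt.comp (f := fun x : ℝ => (x : ℂ) * Complex.I) h1 h2).continuousWithinAt
    · intro M x hx
      have hx' : y / 2 < x := hx
      exact tf_bound h k p hk hp τ hτ M _ (good_yI Y x (by linarith)) (y / 2) (by linarith)
        (by simpa using hx'.le) (by simp)
  exact (hc.continuousAt (Ioi_mem_nhds (by linarith))).continuousWithinAt

/-- The period integral. -/
def Ip (k n p : ℕ) (τ : ℂ) : ℂ :=
  ∫ y in Set.Ioi (0 : ℝ), Af k p ((y : ℂ) * Complex.I) τ * (y : ℂ) ^ n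

lemma Af_meas {τ0 : ℂ} {r η Y : ℝ} (h : SepH τ0 r η Y) (k n p : ℕ) (hk : 2 ≤ k)
    (hp : p ≤ 2 * k) (τ : ℂ) (hτ : τ ∈ Metric.ball τ0 r) :
    AEStronglyMeasurable (fun y : ℝ => Af k p ((y : ℂ) * Complex.I) τ * (y : ℂ) ^ n)
      (volume.restrict (Set.Ioi 0)) := by
  refine ContinuousOn.aestronglyMeasurable ?_ measurableSet_Ioi
  refine (Af_continuousOn h k p hk hp τ hτ).mul ?_
  fun_prop

lemma bd_integrable (C : ℝ) :
    Integrable (fun y : ℝ => C * (1 + y ^ 2)⁻¹) (volume.restrict (Set.Ioi 0)) :=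
  (integrable_inv_one_add_sq.const_mul C).restrict

lemma Af_integrable {τ0 : ℂ} {r η Y : ℝ} (h : SepH τ0 r η Y) (k n p : ℕ) (hk : 2 ≤ k)
    (hn : n ≤ 2 * k - 2) (hp : p ≤ 2 * k) (τ : ℂ) (hτ : τ ∈ Metric.ball τ0 r) :
    Integrable (fun y : ℝ => Af k p ((y : ℂ) * Complex.I) τ * (y : ℂ) ^ n)
      (volume.restrict (Set.Ioi 0)) := by
  refine Integrable.mono' (bd_integrable (2 * Cd k η Y)) (Af_meas h k n p hk hp τ hτ) ?_
  refine (ae_restrict_iff' measurableSet_Ioi).2 (Filter.Eventually.of_forall (fun y hy => ?_))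
  exact Af_int_bound h k n p hk hn hp τ hτ y hy

lemma Dm_integral (μ : Measure ℝ) (X Y : ℝ → ℂ) (hX : Integrable X μ) (hY : Integrable Y μ) :
    ∫ y, Dm (X y) (Y y) ∂μ = Dm (∫ y, X y ∂μ) (∫ y, Y y ∂μ) := by
  unfold Dm
  rw [integral_add (hX.smul_const _) (hY.smul_const _), integral_smul_const, integral_smul_const]

lemma Dm_meas (μ : Measure ℝ) (X Y : ℝ → ℂ) (hX : Integrable X μ) (hY : Integrable Y μ) :
    AEStronglyMeasurable (fun y => Dm (X y) (Y y)) μ := by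
  unfold Dm
  have h1 := hX.smul_const (ContinuousLinearMap.id ℝ ℂ)
  have h2 := hY.smul_const (Complex.conjCLE : ℂ →L[ℝ] ℂ)
  exact h1.aestronglyMeasurable.add h2.aestronglyMeasurable

lemma Ip_hasFDerivAt {τ0 : ℂ} {r η Y : ℝ} (h : SepH τ0 r η Y) (k n p : ℕ) (hk : 2 ≤ k)
    (hn : n ≤ 2 * k - 2) (hp1 : 1 ≤ p) (hp2 : p + 1 ≤ 2 * k) (τ : ℂ)
    (hτ : τ ∈ Metric.ball τ0 r) :
    HasFDerivAt (𝕜 := ℝ) (fun τ => Ip k n p τ)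
      (Dm (cX p τ.im * (Ip k n p τ - Ip k n (p + 1) τ))
        (cX (2 * k - p) τ.im * (Ip k n (p - 1) τ - Ip k n p τ))) τ := by
  have hFI : ∀ q ≤ 2 * k, Integrable (fun y : ℝ => Af k q ((y : ℂ) * Complex.I) τ * (y : ℂ) ^ n)
      (volume.restrict (Set.Ioi 0)) := fun q hq => Af_integrable h k n q hk hn hq τ hτ
  let g : ℕ → ℂ → ℝ → ℂ := fun q w y => Af k q ((y : ℂ) * Complex.I) w * (y : ℂ) ^ n
  have hX : Integrable (fun y => cX p τ.im * (g p τ y - g (p + 1) τ y))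
      (volume.restrict (Set.Ioi 0)) :=
    ((hFI p (by omega)).sub (hFI (p + 1) (by omega))).const_mul _
  have hY : Integrable (fun y => cX (2 * k - p) τ.im * (g (p - 1) τ y - g p τ y))
      (volume.restrict (Set.Ioi 0)) :=
    ((hFI (p - 1) (by omega)).sub (hFI p (by omega))).const_mul _
  have key := hasFDerivAt_integral_of_dominated_of_fderiv_le (𝕜 := ℝ)
    (μ := volume.restrict (Set.Ioi (0 : ℝ))) (x₀ := τ) (s := Metric.ball τ0 r)
    (F := fun w y => g p w y)
    (F' := fun w y => Dm (cX p w.im * (g p w y - g (p + 1) w y))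
        (cX (2 * k - p) w.im * (g (p - 1) w y - g p w y)))
    (bound := fun y => 2 * k / τ0.im * 4 * (2 * Cd k η Y * (1 + y ^ 2)⁻¹))
    (Metric.isOpen_ball.mem_nhds hτ)
    (by
      filter_upwards [Metric.isOpen_ball.mem_nhds hτ] with w hw
      exact Af_meas h k n p hk (by omega) w hw)
    (hFI p (by omega)) (Dm_meas _ _ _ hX hY)
    (by
      refine (ae_restrict_iff' measurableSet_Ioi).2
        (Filter.Eventually.of_forall (fun y hy w hw => ?_))
      have hb : ∀ q ≤ 2 * k, ‖g q w y‖ ≤ 2 * Cd k η Y * (1 + y ^ 2)⁻¹ :=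
        fun q hq => Af_int_bound h k n q hk hn hq w hw y hy
      exact Dm_bound _ _ _ _ _ _ _ _ (cX_norm h hw k p (by omega))
        (cX_norm h hw k _ (by omega)) rfl (hb _ (by omega)) (hb _ (by omega)) (hb _ (by omega)))
    ((bd_integrable _).const_mul _)
    (by
      refine (ae_restrict_iff' measurableSet_Ioi).2
        (Filter.Eventually.of_forall (fun y hy w hw => ?_))
      have h1 := (Af_hasFDerivAt h k p hk hp1 hp2 y hy w hw).mul_const ((y : ℂ) ^ n)
      refine h1.congr_fderiv ?_
      ext1 x
      simp [Dm_apply, g]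
      ring)
  refine key.congr_fderiv ?_
  rw [Dm_integral _ _ _ hX hY, integral_const_mul, integral_const_mul,
    integral_sub (hFI p (by omega)) (hFI (p + 1) (by omega)),
    integral_sub (hFI (p - 1) (by omega)) (hFI p (by omega))]
  rfl

lemma Hpet_eq (k : ℕ) (hk : 2 ≤ k) (z τ : ℂ) (hτ : τ.im ≠ 0) :
    Hpet k z τ = (τ.im : ℂ) ^ (2 * k - 1) * Af k 1 z τ := by
  unfold Hpet Af
  rw [← tsum_mul_left]
  refine tsum_congr (fun M => ?_)
  have hj := jfac_ne M τ hτ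
  have hjc : starRingEnd ℂ (jfac M τ) ≠ 0 := by simpa using hj
  obtain ⟨s, hs⟩ : ∃ s, 2 * k - 2 = s := ⟨_, rfl⟩
  have hs1 : 2 * k - 1 = s + 1 := by omega
  have hs2 : (1 : ℤ) - 2 * (k : ℤ) = -((s + 1 : ℕ) : ℤ) := by omega
  unfold tf
  rw [hs, hs1, hs2, Lf_eq M z τ hτ, Lf_eq M z _ (by simpa using hτ), moeb_conj, jfac_conj, moeb_im,
    zpow_neg, zpow_natCast, Complex.ofReal_div, Complex.normSq_eq_conj_mul_self]
  simp only [div_eq_mul_inv, mul_inv, mul_pow, inv_pow, pow_one]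
  set A := (z - moeb M τ)⁻¹
  set B := ((z - (starRingEnd ℂ) (moeb M τ)) ^ (s + 1))⁻¹
  field_simp
  ring

lemma im_hasFDerivAt (τ : ℂ) : HasFDerivAt (𝕜 := ℝ) (fun τ : ℂ => (τ.im : ℂ))
    (Dm (1 / (2 * Complex.I)) (-1 / (2 * Complex.I))) τ := by
  have h := (Dm (1 / (2 * Complex.I)) (-1 / (2 * Complex.I))).hasFDerivAt (x := τ)
  have e : (fun τ : ℂ => (τ.im : ℂ)) = Dm (1 / (2 * Complex.I)) (-1 / (2 * Complex.I)) := by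
    funext w
    have h2 := Complex.sub_conj w
    push_cast at h2
    have hI := Complex.I_ne_zero
    rw [Dm_apply]
    have : (w.im : ℂ) = (w - starRingEnd ℂ w) / (2 * Complex.I) := by rw [h2]; field_simp
    rw [this]; ring
  rw [e]; exact h

lemma dtau_of_hasFDerivAt {f : ℂ → ℂ} {X Y τ : ℂ} (h : HasFDerivAt (𝕜 := ℝ) f (Dm X Y) τ) :
    dtau f τ = X := by
  unfold dtau
  rw [h.fderiv, Dm_apply, Dm_apply]
  simp
  linear_combination (-X + Y) / 2 * Complex.I_mul_I

lemma raise_step {τ0 : ℂ} {r η Y : ℝ} (h : SepH τ0 r η Y) (k n m : ℕ) (hk : 2 ≤ k)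
    (hn : n ≤ 2 * k - 2) (hm : m + 2 ≤ 2 * k) (C : ℂ) (τ : ℂ) (hτ : τ ∈ Metric.ball τ0 r)
    (f : ℂ → ℂ) (hf : ∀ w ∈ Metric.ball τ0 r,
      f w = C * ((w.im : ℂ) ^ (2 * k - 1 - m) * Ip k n (m + 1) w)) :
    raiseOp (2 - 2 * k + 2 * m) f τ =
      C * ((m : ℂ) + 1) * ((τ.im : ℂ) ^ (2 * k - 1 - (m + 1)) * Ip k n (m + 2) τ) := by
  have hv : (τ.im : ℂ) ≠ 0 := by
    have h1 := h.im_ge hτ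
    have h0 := h.im0_pos
    exact_mod_cast (by linarith : τ.im ≠ 0)
  obtain ⟨s, hs⟩ : ∃ s, 2 * k - 1 - m = s + 1 := ⟨2 * k - 1 - m - 1, by omega⟩
  have hs2 : 2 * k - 1 - (m + 1) = s := by omega
  rw [hs] at hf
  rw [hs2]
  have hI := Ip_hasFDerivAt h k n (m + 1) hk hn (by omega) (by omega) τ hτ
  have hV := HasFDerivAt.pow (im_hasFDerivAt τ) (s + 1)
  have hP := (hV.fun_mul hI).const_mul C
  have hI0 := Complex.I_ne_zero
  set Yc := cX (2 * k - (m + 1)) τ.im * (Ip k n (m + 1 - 1) τ - Ip k n (m + 1) τ)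
  set Xc := cX (m + 1) τ.im * (Ip k n (m + 1) τ - Ip k n (m + 1 + 1) τ) with hXc
  have hD : HasFDerivAt (𝕜 := ℝ) f
      (Dm (C * ((τ.im : ℂ) ^ (s + 1) * Xc + Ip k n (m + 1) τ * ((s + 1 : ℂ) * (τ.im : ℂ) ^ s *
        (1 / (2 * Complex.I)))))
        (C * ((τ.im : ℂ) ^ (s + 1) * Yc + Ip k n (m + 1) τ * ((s + 1 : ℂ) * (τ.im : ℂ) ^ s *
        (-1 / (2 * Complex.I)))))) τ := by
    have h2 := hP.congr_of_eventuallyEq (f₁ := f) (by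
      filter_upwards [Metric.isOpen_ball.mem_nhds hτ] with w hw
      exact hf w hw)
    refine h2.congr_fderiv ?_
    ext1 x
    simp [Dm_apply]
    ring
  unfold raiseOp
  rw [dtau_of_hasFDerivAt hD, hf τ hτ, hXc]
  have hk2 : (s : ℂ) = 2 * k - 2 - m := by
    have : (s + m + 2 : ℕ) = 2 * k := by omega
    have := congrArg (fun x : ℕ => (x : ℂ)) this
    push_cast at this
    linear_combination this
  unfold cX
  push_cast
  field_simp
  rw [hk2]
  ring

lemma raise_formula {τ0 : ℂ} {r η Y : ℝ} (h : SepH τ0 r η Y) (k n : ℕ) (hk : 2 ≤ k)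
    (hn : n ≤ 2 * k - 2) (m : ℕ) (hm : m + 1 ≤ 2 * k) : ∀ τ ∈ Metric.ball τ0 r,
    raiseIter (2 - 2 * k) m (Hlhmf k n) τ =
      (2 * Complex.I) ^ (2 * k - 2) / (2 * (π : ℂ)) * (Nat.factorial m : ℂ) *
        ((τ.im : ℂ) ^ (2 * k - 1 - m) * Ip k n (m + 1) τ) := by
  induction m with
  | zero =>
    intro τ hτ
    have hv : τ.im ≠ 0 := by
      have h1 := h.im_ge hτ
      have h0 := h.im0_pos
      linarith
    simp only [raiseIter, Hlhmf, Ip, Nat.factorial_zero, Nat.cast_one, mul_one, Nat.sub_zero,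
      Nat.zero_add]
    congr 1
    rw [← integral_const_mul]
    refine integral_congr_ae (Filter.Eventually.of_forall (fun y => ?_))
    simp only [Hpet_eq k hk _ τ hv]
    ring
  | succ m ih =>
    intro τ hτ
    have := raise_step h k n m hk hn (by omega) _ τ hτ _ (ih (by omega))
    simp only [raiseIter]
    rw [this, Nat.factorial_succ]
    push_cast
    ring

lemma disc_cast (a b c : ℤ) (hd : b ^ 2 - 4 * a * c < 0) :
    (((b ^ 2 - 4 * a * c).natAbs : ℝ)) = 4 * a * c - b ^ 2 := by
  have h : (((b ^ 2 - 4 * a * c).natAbs : ℤ)) = 4 * a * c - b ^ 2 := by omega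
  have := congrArg (fun x : ℤ => (x : ℝ)) h
  push_cast at this
  rw [← this]
  simp

lemma cm_eq (a b c : ℤ) :
    cmPoint a b c = ((-(b : ℝ) / (2 * a) : ℝ) : ℂ) +
      ((Real.sqrt (((b ^ 2 - 4 * a * c).natAbs : ℝ)) / (2 * a) : ℝ) : ℂ) * Complex.I := by
  unfold cmPoint
  push_cast
  ring

lemma aux_im (x y : ℝ) : ((x : ℂ) + (y : ℂ) * Complex.I).im = y := by simp

lemma aux_re (x y : ℝ) : ((x : ℂ) + (y : ℂ) * Complex.I).re = x := by simp

lemma cm_sep (a b c : ℤ) (ha : 0 < a) (hd : b ^ 2 - 4 * a * c < 0)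
    (hre : ∀ M : SL2Z, (moeb M (cmPoint a b c)).re ≠ 0) :
    0 < (cmPoint a b c).im ∧ ∃ ε > 0, ∀ M : SL2Z,
      ε * (moeb M (cmPoint a b c)).im ≤ |(moeb M (cmPoint a b c)).re| := by
  have hD := disc_cast a b c hd
  have hD0 : (0 : ℝ) < 4 * a * c - b ^ 2 := by
    have : (b : ℝ) ^ 2 - 4 * a * c < 0 := by exact_mod_cast hd
    linarith
  have ha' : (0 : ℝ) < a := by exact_mod_cast ha
  set S := Real.sqrt (((b ^ 2 - 4 * a * c).natAbs : ℝ)) with hS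
  have hS0 : 0 < S := by rw [hS, hD]; exact Real.sqrt_pos.2 hD0
  have hS2 : S ^ 2 = 4 * a * c - b ^ 2 := by rw [hS, Real.sq_sqrt (by positivity), hD]
  have him : (cmPoint a b c).im = S / (2 * a) := by rw [cm_eq, aux_im]
  have hr : (cmPoint a b c).re = -b / (2 * a) := by rw [cm_eq, aux_re]
  have hv : 0 < (cmPoint a b c).im := by rw [him]; positivity
  refine ⟨hv, 1 / S, by positivity, fun M => ?_⟩
  have hj : 0 < Complex.normSq (jfac M (cmPoint a b c)) :=
    Complex.normSq_pos.2 (jfac_ne M _ hv.ne')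
  have hN : Complex.normSq (cmPoint a b c) = c / a := by
    rw [Complex.normSq_apply, him, hr]
    field_simp
    nlinarith [hS2]
  have h0 := hre M
  rw [moeb_re] at h0 ⊢
  rw [moeb_im, hN, hr] at *
  set K : ℤ := 2 * (M.1 0 0) * (M.1 1 0) * c - (M.1 0 0 * M.1 1 1 + M.1 0 1 * M.1 1 0) * b +
    2 * (M.1 0 1) * (M.1 1 1) * a with hK
  have e : (M.1 0 0 : ℝ) * M.1 1 0 * (c / a) + ((M.1 0 0 : ℝ) * M.1 1 1 + M.1 0 1 * M.1 1 0) *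
      (-b / (2 * a)) + M.1 0 1 * M.1 1 1 = (K : ℝ) / (2 * a) := by
    rw [hK]; push_cast; field_simp
    ring
  rw [e] at h0 ⊢
  have hK0 : K ≠ 0 := by
    intro h; apply h0; rw [h]; simp
  have hK1 : (1 : ℝ) ≤ |(K : ℝ)| := by exact_mod_cast Int.one_le_abs hK0
  rw [him, abs_div, abs_div, abs_of_pos hj, abs_of_pos (by positivity : (0 : ℝ) < 2 * a)]
  rw [← mul_div_assoc]
  gcongr
  rw [← mul_div_assoc]
  gcongr
  rw [one_div, inv_mul_cancel₀ hS0.ne']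
  exact hK1

lemma qfC_eq (a b c : ℤ) (ha : 0 < a) (hd : b ^ 2 - 4 * a * c < 0) (x y : ℂ) :
    qfC a b c x y = a * ((x - cmPoint a b c * y) * (x - starRingEnd ℂ (cmPoint a b c) * y)) := by
  have hD := disc_cast a b c hd
  have ha' : (a : ℂ) ≠ 0 := by exact_mod_cast ha.ne'
  rw [cm_eq]
  set S := Real.sqrt (((b ^ 2 - 4 * a * c).natAbs : ℝ)) with hS
  have hS2 : S ^ 2 = 4 * a * c - b ^ 2 := by rw [hS, Real.sq_sqrt (by positivity), hD]
  have hS2' : (S : ℂ) ^ 2 = 4 * a * c - b ^ 2 := by exact_mod_cast hS2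
  unfold qfC
  simp only [map_add, map_mul, Complex.conj_ofReal, Complex.conj_I]
  push_cast
  field_simp
  have hI := Complex.I_sq
  linear_combination (-y ^ 2) * hS2' + (y ^ 2 * (S : ℂ) ^ 2) * hI

lemma Lf_inv (M : SL2Z) (z τ : ℂ) : Lf M⁻¹ z τ =
    ((M.1 0 0 : ℂ) * z + (M.1 0 1 : ℂ)) - τ * ((M.1 1 0 : ℂ) * z + (M.1 1 1 : ℂ)) := by
  unfold Lf
  rw [Matrix.SpecialLinearGroup.SL2_inv_expl]
  simp
  ring

lemma fkP_sum (k : ℕ) (a b c : ℤ) (ha : 0 < a) (hd : b ^ 2 - 4 * a * c < 0) (z : ℂ) :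
    ∑' M : SL2Z, (qfC a b c ((M.1 0 0 : ℂ) * z + (M.1 0 1 : ℂ))
      ((M.1 1 0 : ℂ) * z + (M.1 1 1 : ℂ))) ^ (-(k : ℤ)) =
    ((a : ℂ) ^ k)⁻¹ * Af k k z (cmPoint a b c) := by
  unfold Af
  rw [← (Equiv.inv SL2Z).tsum_eq (fun M => tf k k M z (cmPoint a b c)), ← tsum_mul_left]
  refine tsum_congr (fun M => ?_)
  rw [qfC_eq a b c ha hd]
  simp only [Equiv.inv_apply, tf, Lf_inv, zpow_neg, zpow_natCast, (by omega : 2 * k - k = k)]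
  rw [mul_pow, mul_pow, mul_inv, mul_inv, inv_pow, inv_pow]

lemma rpow_a (D : ℝ) (hD : 0 ≤ D) (k : ℕ) (hk : 2 ≤ k) :
    D ^ ((k : ℝ) - 1 / 2) = Real.sqrt D ^ (2 * k - 1) := by
  rw [Real.sqrt_eq_rpow, ← Real.rpow_natCast, ← Real.rpow_mul hD]
  congr 1
  rw [Nat.cast_sub (by omega)]
  push_cast
  ring

lemma rpow_b (D : ℝ) (hD : 0 ≤ D) (k : ℕ) (hk : 2 ≤ k) :
    D ^ (((k : ℝ) - 1) / 2) = Real.sqrt D ^ (k - 1) := by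
  rw [Real.sqrt_eq_rpow, ← Real.rpow_natCast, ← Real.rpow_mul hD]
  congr 1
  rw [Nat.cast_sub (by omega)]
  push_cast
  ring


/-- the period `r_n(f_{k,P})` as a special value of the raised locally harmonic
Maass form `H_{1-k,n}`. -/
theorem period_fkP_eq_raised_Hlhmf (k n : ℕ) (hk : 2 ≤ k) (hn : n ≤ 2 * k - 2)
    (a b c : ℤ) (ha : 0 < a) (hd : b ^ 2 - 4 * a * c < 0)
    (hre : ∀ M : SL2Z, (moeb M (cmPoint a b c)).re ≠ 0) :
    periodN n (fkP k a b c) =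
      ((-1 : ℂ) ^ (k - 1) * (((((b ^ 2 - 4 * a * c).natAbs : ℝ)) ^ (((k : ℝ) - 1) / 2) : ℝ) : ℂ) /
          ((2 : ℂ) ^ (k - 2) * (Nat.factorial (k - 1) : ℂ) * (wP a b c : ℂ))) *
        raiseIter (2 - 2 * k) (k - 1) (Hlhmf k n) (cmPoint a b c) := by
  obtain ⟨hv, ε, hε, hsep⟩ := cm_sep a b c ha hd hre
  obtain ⟨r, hr, hr2, η, hη, Y, hY, hL⟩ := sep (cmPoint a b c) hv ε hε hsep
  have h : SepH (cmPoint a b c) r η Y := ⟨hr, hr2, hη, hY, hL⟩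
  have hform := raise_formula h k n hk hn (k - 1) (by omega) _ (Metric.mem_ball_self hr)
  rw [hform]
  have him : (cmPoint a b c).im =
      Real.sqrt (((b ^ 2 - 4 * a * c).natAbs : ℝ)) / (2 * a) := by rw [cm_eq, aux_im]
  rw [him, rpow_b _ (by positivity) k hk]
  have hper : periodN n (fkP k a b c) =
      ((Real.sqrt (((b ^ 2 - 4 * a * c).natAbs : ℝ)) ^ (2 * k - 1) : ℝ) : ℂ) /
      (2 * (π : ℂ) * (wP a b c : ℂ)) * ((a : ℂ) ^ k)⁻¹ * Ip k n k (cmPoint a b c) := by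
    unfold periodN Ip
    rw [← integral_const_mul]
    refine integral_congr_ae (Filter.Eventually.of_forall (fun y => ?_))
    simp only [fkP, fkP_sum k a b c ha hd, rpow_a _ (Nat.cast_nonneg _) k hk]
    ring
  rw [hper]
  set S := Real.sqrt (((b ^ 2 - 4 * a * c).natAbs : ℝ))
  have ha' : (a : ℂ) ≠ 0 := by exact_mod_cast ha.ne'
  have hf : (Nat.factorial (k - 1) : ℂ) ≠ 0 := by exact_mod_cast Nat.factorial_ne_zero _
  have hpi : (π : ℂ) ≠ 0 := by exact_mod_cast Real.pi_ne_zero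
  obtain ⟨m, rfl⟩ : ∃ m, k = m + 2 := ⟨k - 2, by omega⟩
  have e1 : m + 2 - 1 = m + 1 := by omega
  have e2 : 2 * (m + 2) - 1 = (m + 1) + (m + 2) := by omega
  have e3 : 2 * (m + 2) - 2 = 2 * (m + 1) := by omega
  have e4 : m + 1 + (m + 2) - (m + 1) = m + 2 := by omega
  have e5 : m + 2 - 2 = m := by omega
  rw [e1] at hf
  have hI : (2 * Complex.I) ^ (2 * (m + 1)) = (-1 : ℂ) ^ (m + 1) * 4 ^ (m + 1) := by
    rw [pow_mul, mul_pow, Complex.I_sq, ← mul_pow]; norm_num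
  have h1 : (-1 : ℂ) ^ (m + 1) * (-1 : ℂ) ^ (m + 1) = 1 := by
    rw [← mul_pow]; norm_num
  have h4 : (4 : ℂ) ^ (m + 1) = 2 ^ m * 2 ^ (m + 2) := by
    rw [← pow_add, (by norm_num : (4 : ℂ) = 2 ^ 2), ← pow_mul]; congr 1; ring
  simp only [e2, e3, e1, e4, e5, hI, h4]
  push_cast
  rw [div_pow, mul_pow]
  generalize Ip (m + 2) n (m + 2) (cmPoint a b c) = J
  rw [show m + 1 + 1 = m + 2 from rfl] at *
  simp only [div_eq_mul_inv, mul_inv]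
  generalize ((wP a b c : ℂ))⁻¹ = w
  have h2m : (2 : ℂ) ^ m ≠ 0 := pow_ne_zero _ two_ne_zero
  have h2m2 : (2 : ℂ) ^ (m + 2) ≠ 0 := pow_ne_zero _ two_ne_zero
  have ham : (a : ℂ) ^ (m + 2) ≠ 0 := pow_ne_zero _ ha'
  rw [pow_add]
  generalize (2 : ℂ) ^ (m + 2) = t2 at *
  generalize (2 : ℂ) ^ m = t at *
  generalize (a : ℂ) ^ (m + 2) = t3 at *
  generalize (-1 : ℂ) ^ (m + 1) = g at *
  field_simp
  linear_combination (-((S : ℂ) ^ 3 * (S : ℂ) ^ (m * 2) * w * J)) * h1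

end LHMF
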